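/- arXiv:2010.10040 — 2 statements merged into one kernel-verified Lean document; each statement's English description precedes it below -/
import Mathlib

section
/- For any Borel set R in the n-dimensional Euclidean space ℝⁿ, the Lebesgue measure of R equals (ω_n / 2ⁿ) times the n-dimensional Hausdorff measure of R, where ω_n is the Lebesgue measure of the unit ball in ℝⁿ. -/
open MeasureTheory

/-!
Both inequalities compare a covering of `R` with the ball of diameter `1`, of measure `ω_n / 2ⁿ`.
Every set of diameter `d` has measure at most that of a ball of diameter `d` (the isodiametric
inequality), so a covering of `R` by sets `Aᵢ` satisfies `μ R ≤ (ω_n / 2ⁿ) ∑ (diam Aᵢ)ⁿ`.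
Conversely, Besicovitch's theorem covers `R` by arbitrarily small balls whose measures add up to at
most `μ R + ε`, and for balls the isodiametric inequality is an equality.

The isodiametric inequality holds for an arbitrary norm: `(A - A) / 2` is contained in the ball of
radius `diam A / 2` about the origin, and the Brunn–Minkowski inequality applied to `A` and `-A`
gives `μ A ≤ μ ((A - A) / 2)`. Brunn–Minkowski is the case of indicator functions of the
Prékopa–Leindler inequality, which passes from the line to higher dimensions by Fubini.
-/

section

open Metric Module Set Filter Topology
open scoped ENNReal Pointwise

theorem ennreal_rpow_mul_rpow_le_ofReal_mul_add {a b : ℝ} (ha : 0 < a) (hb : 0 < b)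
    (hab : a + b = 1) (x y : ℝ≥0∞) :
    x ^ a * y ^ b ≤ ENNReal.ofReal a * x + ENNReal.ofReal b * y := by
  have young := ENNReal.young_inequality (x ^ a) (y ^ b) (Real.HolderConjugate.inv_inv ha hb hab)
  rwa [ENNReal.rpow_rpow_inv ha.ne', ENNReal.rpow_rpow_inv hb.ne', ENNReal.ofReal_inv_of_pos ha,
    ENNReal.ofReal_inv_of_pos hb, div_eq_mul_inv, div_eq_mul_inv, inv_inv, inv_inv, mul_comm x,
    mul_comm y] at young

theorem volume_Ioi_zero_inter_ofReal_lt (c : ℝ≥0∞) :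
    volume {t ∈ Ioi (0 : ℝ) | ENNReal.ofReal t < c} = c := by
  rcases eq_or_ne c ∞ with rfl | hc
  · simp only [ENNReal.ofReal_lt_top, and_true]
    exact Real.volume_Ioi
  · have hIoo : {t ∈ Ioi (0 : ℝ) | ENNReal.ofReal t < c} = Ioo 0 c.toReal := by
      ext t
      exact and_congr_right fun ht => ENNReal.ofReal_lt_iff_lt_toReal (le_of_lt ht) hc
    rw [hIoo, Real.volume_Ioo, sub_zero, ENNReal.ofReal_toReal hc]

theorem lintegral_eq_setLIntegral_measure_ofReal_lt {α : Type*} [MeasurableSpace α]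
    (μ : Measure α) [SFinite μ] {f : α → ℝ≥0∞} (hf : Measurable f) :
    ∫⁻ x, f x ∂μ = ∫⁻ t in Ioi (0 : ℝ), μ {x | ENNReal.ofReal t < f x} := by
  have hmeas : MeasurableSet {p : α × ℝ | ENNReal.ofReal p.2 < f p.1} :=
    measurableSet_lt (by fun_prop) (by fun_prop)
  calc ∫⁻ x, f x ∂μ
      = ∫⁻ x, volume.restrict (Ioi 0) (Prod.mk x ⁻¹' {p | ENNReal.ofReal p.2 < f p.1}) ∂μ := by
        refine lintegral_congr fun x => ?_
        rw [Measure.restrict_apply (measurable_prodMk_left hmeas), inter_comm]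
        exact (volume_Ioi_zero_inter_ofReal_lt (f x)).symm
    _ = ∫⁻ t in Ioi (0 : ℝ), μ {x | ENNReal.ofReal t < f x} := by
        rw [← Measure.prod_apply hmeas, Measure.prod_apply_symm hmeas]
        rfl

theorem iSup_lintegral_min_natCast {α : Type*} [MeasurableSpace α] (μ : Measure α)
    {f : α → ℝ≥0∞} (hf : Measurable f) :
    ⨆ k : ℕ, ∫⁻ x, min (f x) k ∂μ = ∫⁻ x, f x ∂μ := by
  rw [← lintegral_iSup (fun k => hf.min measurable_const)
    fun j k hjk x => min_le_min_left _ (Nat.cast_le.2 hjk)]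
  refine lintegral_congr fun x => ?_
  rw [← inf_iSup_eq, ENNReal.iSup_natCast, inf_top_eq]

theorem volume_add_volume_le_volume_add_of_isCompact {K L : Set ℝ} (hK : IsCompact K)
    (hL : IsCompact L) (hKne : K.Nonempty) (hLne : L.Nonempty) :
    volume K + volume L ≤ volume (K + L) := by
  obtain ⟨M, hM⟩ := hK.exists_isGreatest hKne
  obtain ⟨m, hm⟩ := hL.exists_isLeast hLne
  -- These translates of `K` and `L` lie in `K + L` and meet in at most one point.
  have hinter : (m +ᵥ K) ∩ (M +ᵥ L) ⊆ {M + m} := by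
    rintro - ⟨⟨x, hx, rfl⟩, y, hy, hxy⟩
    have hxM := hM.2 hx
    have hmy := hm.2 hy
    simp only [vadd_eq_add, mem_singleton_iff] at hxy ⊢
    linarith
  calc volume K + volume L
      = volume (m +ᵥ K) + volume (M +ᵥ L) := by rw [measure_vadd, measure_vadd]
    _ = volume ((m +ᵥ K) ∪ (M +ᵥ L)) :=
        (measure_union₀ (hL.vadd M).measurableSet.nullMeasurableSet
          (measure_mono_null hinter Real.volume_singleton)).symm
    _ ≤ volume (K + L) := by
        refine measure_mono (union_subset ?_ ?_)
        · rintro - ⟨x, hx, rfl⟩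
          exact ⟨x, hx, m, hm.1, add_comm x m⟩
        · rintro - ⟨y, hy, rfl⟩
          exact ⟨M, hM.1, y, hy, rfl⟩

theorem volume_add_volume_le_volume_add {A B : Set ℝ} (hA : MeasurableSet A) (hB : MeasurableSet B)
    (hAne : A.Nonempty) (hBne : B.Nonempty) : volume A + volume B ≤ volume (A + B) := by
  obtain ⟨x, hx⟩ := hAne
  obtain ⟨y, hy⟩ := hBne
  rw [hA.measure_eq_iSup_isCompact, hB.measure_eq_iSup_isCompact]
  simp only [iSup_and']
  refine ENNReal.biSup_add_biSup_le' ⟨∅, empty_subset A, isCompact_empty⟩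
    ⟨∅, empty_subset B, isCompact_empty⟩ fun K ⟨hKA, hK⟩ L ⟨hLB, hL⟩ => ?_
  calc volume K + volume L ≤ volume (insert x K) + volume (insert y L) := by
        gcongr <;> exact subset_insert _ _
    _ ≤ volume (insert x K + insert y L) :=
        volume_add_volume_le_volume_add_of_isCompact (hK.insert x) (hL.insert y)
          (insert_nonempty x K) (insert_nonempty y L)
    _ ≤ volume (A + B) :=
        measure_mono (add_subset_add (insert_subset hx hKA) (insert_subset hy hLB))

theorem ofReal_mul_volume_add_le_volume_smul_add_smul {a b : ℝ} (ha : 0 < a) (hb : 0 < b)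
    {A B : Set ℝ} (hA : MeasurableSet A) (hB : MeasurableSet B)
    (hAne : A.Nonempty) (hBne : B.Nonempty) :
    ENNReal.ofReal a * volume A + ENNReal.ofReal b * volume B ≤ volume (a • A + b • B) := by
  have hsmul {c : ℝ} (hc : 0 < c) (S : Set ℝ) : ENNReal.ofReal c * volume S = volume (c • S) := by
    rw [Measure.addHaar_smul, finrank_self, pow_one, abs_of_pos hc]
  rw [hsmul ha, hsmul hb]
  exact volume_add_volume_le_volume_add (hA.const_smul₀ a) (hB.const_smul₀ b)
    hAne.smul_set hBne.smul_set

section PrekopaLeindler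

variable {E F : Type*} [AddCommGroup E] [Module ℝ E] [MeasurableSpace E] [AddCommGroup F]
  [Module ℝ F] [MeasurableSpace F] {a b : ℝ}

/-- The measure `μ` satisfies the Prékopa–Leindler inequality with weights `a` and `b` (meant to be
positive with `a + b = 1`). Phrased as a property of `μ`, so that it can be transported along linear
maps and to product measures. -/
def PrekopaLeindler (μ : Measure E) (a b : ℝ) : Prop :=
  ∀ ⦃f g h : E → ℝ≥0∞⦄, Measurable f → Measurable g → Measurable h →
    (∀ x y, f x ^ a * g y ^ b ≤ h (a • x + b • y)) →
      (∫⁻ x, f x ∂μ) ^ a * (∫⁻ x, g x ∂μ) ^ b ≤ ∫⁻ x, h x ∂μ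

theorem PrekopaLeindler.map {μ : Measure E} (hμ : PrekopaLeindler μ a b) (φ : E →ₗ[ℝ] F)
    (hφ : Measurable φ) : PrekopaLeindler (μ.map φ) a b := by
  intro f g h hf hg hh hfgh
  rw [lintegral_map hf hφ, lintegral_map hg hφ, lintegral_map hh hφ]
  refine hμ (hf.comp hφ) (hg.comp hφ) (hh.comp hφ) fun x y => ?_
  simpa only [Function.comp_apply, map_add, map_smul] using hfgh (φ x) (φ y)

theorem PrekopaLeindler.smul_measure {μ : Measure E} (hμ : PrekopaLeindler μ a b)
    (ha : 0 ≤ a) (hb : 0 ≤ b) (hab : a + b = 1) (c : ℝ≥0∞) : PrekopaLeindler (c • μ) a b := by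
  intro f g h hf hg hh hfgh
  simp only [lintegral_smul_measure, smul_eq_mul]
  calc (c * ∫⁻ x, f x ∂μ) ^ a * (c * ∫⁻ x, g x ∂μ) ^ b
      = (c ^ a * c ^ b) * ((∫⁻ x, f x ∂μ) ^ a * (∫⁻ x, g x ∂μ) ^ b) := by
        rw [ENNReal.mul_rpow_of_nonneg _ _ ha, ENNReal.mul_rpow_of_nonneg _ _ hb]
        ring
    _ = c * ((∫⁻ x, f x ∂μ) ^ a * (∫⁻ x, g x ∂μ) ^ b) := by
        rw [← ENNReal.rpow_add_of_nonneg a b ha hb, hab, ENNReal.rpow_one]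
    _ ≤ c * ∫⁻ x, h x ∂μ := by gcongr; exact hμ hf hg hh hfgh

theorem PrekopaLeindler.prod {μ : Measure E} {ν : Measure F} [SFinite ν]
    (hμ : PrekopaLeindler μ a b) (hν : PrekopaLeindler ν a b) :
    PrekopaLeindler (μ.prod ν) a b := by
  intro f g h hf hg hh hfgh
  rw [lintegral_prod f hf.aemeasurable, lintegral_prod g hg.aemeasurable,
    lintegral_prod h hh.aemeasurable]
  refine hμ hf.lintegral_prod_right' hg.lintegral_prod_right' hh.lintegral_prod_right'
    fun x₁ x₂ => ?_
  exact hν (hf.comp measurable_prodMk_left) (hg.comp measurable_prodMk_left)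
    (hh.comp measurable_prodMk_left) fun y₁ y₂ => hfgh (x₁, y₁) (x₂, y₂)

end PrekopaLeindler

section RealLine

variable {a b : ℝ} (ha : 0 < a) (hb : 0 < b) (hab : a + b = 1) {f g h : ℝ → ℝ≥0∞}
include ha hb hab

theorem volume_superlevel_add_le (hf : Measurable f) (hg : Measurable g)
    (hfgh : ∀ x y, f x ^ a * g y ^ b ≤ h (a • x + b • y)) (hsup : ⨆ x, f x = ⨆ x, g x)
    (t : ℝ≥0∞) :
    ENNReal.ofReal a * volume {x | t < f x} + ENNReal.ofReal b * volume {x | t < g x} ≤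
      volume {x | t < h x} := by
  rcases le_or_gt (⨆ x, f x) t with hle | hlt
  · have hempty {u : ℝ → ℝ≥0∞} (hu : ⨆ x, u x ≤ t) : {x | t < u x} = ∅ :=
      eq_empty_of_forall_notMem fun x hx => hx.not_ge ((le_iSup u x).trans hu)
    simp [hempty hle, hempty (hsup ▸ hle)]
  · have hAne : {x | t < f x}.Nonempty := lt_iSup_iff.1 hlt
    have hBne : {x | t < g x}.Nonempty := lt_iSup_iff.1 (hlt.trans_eq hsup)
    refine (ofReal_mul_volume_add_le_volume_smul_add_smul ha hb
      (measurableSet_lt measurable_const hf) (measurableSet_lt measurable_const hg)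
      hAne hBne).trans (measure_mono ?_)
    rintro - ⟨-, ⟨x, hx, rfl⟩, -, ⟨y, hy, rfl⟩, rfl⟩
    calc t = t ^ a * t ^ b := by
          rw [← ENNReal.rpow_add_of_nonneg a b ha.le hb.le, hab, ENNReal.rpow_one]
      _ < f x ^ a * g y ^ b :=
          ENNReal.mul_lt_mul (ENNReal.rpow_lt_rpow hx ha) (ENNReal.rpow_lt_rpow hy hb)
      _ ≤ h (a • x + b • y) := hfgh x y

theorem lintegral_add_le_of_iSup_eq (hf : Measurable f) (hg : Measurable g) (hh : Measurable h)
    (hfgh : ∀ x y, f x ^ a * g y ^ b ≤ h (a • x + b • y)) (hsup : ⨆ x, f x = ⨆ x, g x) :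
    ENNReal.ofReal a * (∫⁻ x, f x) + ENNReal.ofReal b * (∫⁻ x, g x) ≤ ∫⁻ x, h x := by
  rw [lintegral_eq_setLIntegral_measure_ofReal_lt _ hf,
    lintegral_eq_setLIntegral_measure_ofReal_lt _ hg,
    lintegral_eq_setLIntegral_measure_ofReal_lt _ hh,
    ← lintegral_const_mul' _ _ ENNReal.ofReal_ne_top,
    ← lintegral_const_mul' _ _ ENNReal.ofReal_ne_top]
  refine (le_lintegral_add _ _).trans (lintegral_mono fun t => ?_)
  exact volume_superlevel_add_le ha hb hab hf hg hfgh hsup _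

theorem lintegral_rpow_mul_lintegral_rpow_le_of_iSup_ne_top (hf : Measurable f) (hg : Measurable g)
    (hh : Measurable h) (hfgh : ∀ x y, f x ^ a * g y ^ b ≤ h (a • x + b • y))
    (hfb : ⨆ x, f x ≠ ∞) (hgb : ⨆ x, g x ≠ ∞) :
    (∫⁻ x, f x) ^ a * (∫⁻ x, g x) ^ b ≤ ∫⁻ x, h x := by
  rcases eq_or_ne (⨆ x, f x) 0 with hM | hM
  · simp [ENNReal.iSup_eq_zero.1 hM, ha]
  rcases eq_or_ne (⨆ x, g x) 0 with hN | hN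
  · simp [ENNReal.iSup_eq_zero.1 hN, hb]
  -- Scaling `f` by `N` and `g` by `M` makes the suprema equal, as the additive form requires;
  -- both sides of the claim scale by `c`.
  set M := ⨆ x, f x
  set N := ⨆ x, g x
  set c := N ^ a * M ^ b
  have hc₀ : c ≠ 0 := by simp [c, hM, hN, hfb, hgb]
  have hc : c ≠ ∞ := ENNReal.mul_ne_top (ENNReal.rpow_ne_top_of_nonneg ha.le hgb)
    (ENNReal.rpow_ne_top_of_nonneg hb.le hfb)
  have hscale (x y : ℝ≥0∞) : (N * x) ^ a * (M * y) ^ b = c * (x ^ a * y ^ b) := by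
    rw [ENNReal.mul_rpow_of_nonneg _ _ ha.le, ENNReal.mul_rpow_of_nonneg _ _ hb.le]
    ring
  have hsup : ⨆ x, N * f x = ⨆ x, M * g x := by
    rw [← ENNReal.mul_iSup, ← ENNReal.mul_iSup, mul_comm]
  rw [← ENNReal.mul_le_mul_iff_right hc₀ hc, ← hscale, ← lintegral_const_mul N hf,
    ← lintegral_const_mul M hg, ← lintegral_const_mul c hh]
  refine (ennreal_rpow_mul_rpow_le_ofReal_mul_add ha hb hab _ _).trans ?_
  refine lintegral_add_le_of_iSup_eq ha hb hab (hf.const_mul N) (hg.const_mul M) (hh.const_mul c)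
    (fun x y => ?_) hsup
  rw [hscale]
  gcongr
  exact hfgh x y

theorem prekopaLeindler_volume_real : PrekopaLeindler (volume : Measure ℝ) a b := by
  intro f g h hf hg hh hfgh
  have hbdd (u : ℝ → ℝ≥0∞) (k : ℕ) : ⨆ x, min (u x) k ≠ ∞ :=
    ((iSup_le fun _ => min_le_right _ _).trans_lt (ENNReal.natCast_lt_top k)).ne
  rw [← iSup_lintegral_min_natCast volume hf, ← iSup_lintegral_min_natCast volume hg,
    ← ENNReal.orderIsoRpow_apply a ha, ← ENNReal.orderIsoRpow_apply b hb, OrderIso.map_iSup,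
    OrderIso.map_iSup]
  simp only [ENNReal.iSup_mul, ENNReal.mul_iSup, ENNReal.orderIsoRpow_apply]
  refine iSup₂_le fun j k => lintegral_rpow_mul_lintegral_rpow_le_of_iSup_ne_top ha hb hab
    (hf.min measurable_const) (hg.min measurable_const) hh (fun x y => ?_) (hbdd f _) (hbdd g _)
  refine le_trans ?_ (hfgh x y)
  gcongr <;> exact min_le_left _ _

end RealLine

theorem PrekopaLeindler.of_finrank_eq {E F : Type*} [NormedAddCommGroup E] [NormedSpace ℝ E]
    [FiniteDimensional ℝ E] [MeasurableSpace E] [BorelSpace E] [NormedAddCommGroup F]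
    [NormedSpace ℝ F] [FiniteDimensional ℝ F] [MeasurableSpace F] [BorelSpace F]
    {a b : ℝ} {ν : Measure F} [ν.IsAddHaarMeasure] (hν : PrekopaLeindler ν a b) (ha : 0 ≤ a)
    (hb : 0 ≤ b) (hab : a + b = 1) (h : finrank ℝ F = finrank ℝ E) (μ : Measure E)
    [μ.IsAddHaarMeasure] : PrekopaLeindler μ a b := by
  let e : F ≃L[ℝ] E := ContinuousLinearEquiv.ofFinrankEq h
  have hmap : PrekopaLeindler (ν.map e) a b :=
    hν.map e.toLinearEquiv.toLinearMap e.continuous.measurable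
  rw [Measure.isAddLeftInvariant_eq_smul μ (ν.map e)]
  exact hmap.smul_measure ha hb hab _

theorem prekopaLeindler_volume_pi {a b : ℝ} (ha : 0 < a) (hb : 0 < b) (hab : a + b = 1) (n : ℕ) :
    PrekopaLeindler (volume : Measure (Fin n → ℝ)) a b := by
  induction n with
  | zero =>
    intro f g h _ _ _ hfgh
    have huniv : volume (univ : Set (Fin 0 → ℝ)) = 1 := by simp [volume_pi]
    simp only [lintegral_unique, huniv, mul_one]
    exact (hfgh _ _).trans_eq (congrArg h (Subsingleton.elim _ _))
  | succ n ih =>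
    exact ((prekopaLeindler_volume_real ha hb hab).prod ih).of_finrank_eq ha.le hb.le hab
      (by simp [add_comm]) volume

theorem half_smul_sub_subset_closedBall {E : Type*} [SeminormedAddCommGroup E]
    [NormedSpace ℝ E] {A : Set E} (hA : Bornology.IsBounded A) :
    (2⁻¹ : ℝ) • (A - A) ⊆ closedBall 0 (diam A / 2) := by
  rintro - ⟨-, ⟨x, hx, y, hy, rfl⟩, rfl⟩
  rw [mem_closedBall_zero_iff, norm_smul, ← dist_eq_norm, Real.norm_of_nonneg (by norm_num)]
  linarith [dist_le_diam_of_mem hA hx hy]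

theorem ediam_closedBall_le_ofReal {X : Type*} [PseudoMetricSpace X] (x : X) {r : ℝ}
    (hr : 0 ≤ r) : ediam (closedBall x r) ≤ ENNReal.ofReal (2 * r) := by
  rw [← closedEBall_ofReal hr, ENNReal.ofReal_mul zero_le_two, ENNReal.ofReal_ofNat]
  exact ediam_closedEBall_le

section NormedSpace

variable {E : Type*} [NormedAddCommGroup E] [NormedSpace ℝ E] [FiniteDimensional ℝ E]
  [MeasurableSpace E] [BorelSpace E] (μ : Measure E) [μ.IsAddHaarMeasure]

theorem prekopaLeindler_of_isAddHaarMeasure {a b : ℝ} (ha : 0 < a) (hb : 0 < b) (hab : a + b = 1) :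
    PrekopaLeindler μ a b :=
  (prekopaLeindler_volume_pi ha hb hab (finrank ℝ E)).of_finrank_eq ha.le hb.le hab (by simp) μ

theorem measure_rpow_mul_measure_rpow_le_measure_smul_add_smul {a b : ℝ} (ha : 0 < a)
    (hb : 0 < b) (hab : a + b = 1) {A B : Set E} (hA : MeasurableSet A) (hB : MeasurableSet B) :
    μ A ^ a * μ B ^ b ≤ μ (a • A + b • B) := by
  set C := toMeasurable μ (a • A + b • B)
  have hC : MeasurableSet C := measurableSet_toMeasurable _ _
  have hind (x y : E) :
      A.indicator (1 : E → ℝ≥0∞) x ^ a * B.indicator (1 : E → ℝ≥0∞) y ^ b ≤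
        C.indicator 1 (a • x + b • y) := by
    by_cases hx : x ∈ A
    · by_cases hy : y ∈ B
      · have hxy : a • x + b • y ∈ C :=
          subset_toMeasurable _ _ (add_mem_add (smul_mem_smul_set hx) (smul_mem_smul_set hy))
        simp [hx, hy, hxy]
      · simp [hy, hb]
    · simp [hx, ha]
  have key := prekopaLeindler_of_isAddHaarMeasure μ ha hb hab (measurable_one.indicator hA)
    (measurable_one.indicator hB) (measurable_one.indicator hC) hind
  rwa [lintegral_indicator_one hA, lintegral_indicator_one hB, lintegral_indicator_one hC,
    measure_toMeasurable] at key

theorem measure_le_measure_half_smul_sub {A : Set E} (hA : MeasurableSet A) :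
    μ A ≤ μ ((2⁻¹ : ℝ) • (A - A)) := by
  calc μ A = μ A ^ (2⁻¹ : ℝ) * μ (-A) ^ (2⁻¹ : ℝ) := by
        rw [Measure.measure_neg, ← ENNReal.rpow_add_of_nonneg _ _ (by norm_num) (by norm_num)]
        norm_num
    _ ≤ μ ((2⁻¹ : ℝ) • A + (2⁻¹ : ℝ) • -A) :=
        measure_rpow_mul_measure_rpow_le_measure_smul_add_smul μ (by norm_num) (by norm_num)
          (by norm_num) hA hA.neg
    _ = μ ((2⁻¹ : ℝ) • (A - A)) := by rw [← smul_add, sub_eq_add_neg]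

theorem measure_le_measure_closedBall_half_diam {A : Set E} (hA : Bornology.IsBounded A) :
    μ A ≤ μ (closedBall 0 (diam A / 2)) :=
  calc μ A ≤ μ (closure A) := measure_mono subset_closure
    _ ≤ μ ((2⁻¹ : ℝ) • (closure A - closure A)) :=
        measure_le_measure_half_smul_sub μ isClosed_closure.measurableSet
    _ ≤ μ (closedBall 0 (diam A / 2)) :=
        measure_mono (diam_closure A ▸ half_smul_sub_subset_closedBall hA.closure)

theorem measure_closedBall_inv_two :
    μ (closedBall 0 2⁻¹) = μ (closedBall 0 1) / 2 ^ finrank ℝ E := by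
  rw [Measure.addHaar_closedBall' μ 0 (by norm_num), ENNReal.ofReal_pow (by norm_num),
    ENNReal.ofReal_inv_of_pos two_pos, ENNReal.ofReal_ofNat, ← ENNReal.inv_pow, mul_comm,
    div_eq_mul_inv]

theorem measure_closedBall_eq_mul_pow (x : E) {r : ℝ} (hr : 0 ≤ r) :
    μ (closedBall x r) = μ (closedBall 0 2⁻¹) * ENNReal.ofReal (2 * r) ^ finrank ℝ E := by
  have hscale := Measure.addHaar_closedBall_mul μ x (r := 2 * r) (s := 2⁻¹) (by positivity)
    (by positivity)
  rwa [mul_right_comm, mul_inv_cancel₀ two_ne_zero, one_mul, ENNReal.ofReal_pow (by positivity),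
    mul_comm] at hscale

theorem measure_le_mul_ediam_pow {A : Set E} (hA : Bornology.IsBounded A) :
    μ A ≤ μ (closedBall 0 2⁻¹) * ediam A ^ finrank ℝ E := by
  calc μ A ≤ μ (closedBall 0 (diam A / 2)) := measure_le_measure_closedBall_half_diam μ hA
    _ = μ (closedBall 0 2⁻¹) * ediam A ^ finrank ℝ E := by
        rw [measure_closedBall_eq_mul_pow μ 0 (by positivity), mul_div_cancel₀ _ two_ne_zero, diam,
          ENNReal.ofReal_toReal (isBounded_iff_ediam_ne_top.1 hA)]

theorem measure_le_mul_hausdorffMeasure (R : Set E) :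
    μ R ≤ μ (closedBall 0 2⁻¹) * μH[finrank ℝ E] R := by
  set c := μ (closedBall (0 : E) 2⁻¹)
  have hc₀ : c ≠ 0 := (measure_closedBall_pos μ _ (by positivity)).ne'
  have hc : c ≠ ∞ := measure_closedBall_lt_top.ne
  have hle : c⁻¹ • μ ≤ μH[finrank ℝ E] := by
    refine Measure.le_hausdorffMeasure _ _ 1 one_pos fun A hA => ?_
    have hbdd : Bornology.IsBounded A :=
      isBounded_iff_ediam_ne_top.2 (hA.trans_lt ENNReal.one_lt_top).ne
    rw [ENNReal.rpow_natCast, Measure.smul_apply, smul_eq_mul, ENNReal.inv_mul_le_iff hc₀ hc]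
    exact measure_le_mul_ediam_pow μ hbdd
  simpa only [Measure.smul_apply, smul_eq_mul, ENNReal.inv_mul_le_iff hc₀ hc] using hle R

theorem mul_ediam_closedBall_pow_le (x : E) {r : ℝ} (hr : 0 ≤ r) :
    μ (closedBall 0 2⁻¹) * ediam (closedBall x r) ^ finrank ℝ E ≤ μ (closedBall x r) := by
  rw [measure_closedBall_eq_mul_pow μ x hr]
  gcongr
  exact ediam_closedBall_le_ofReal x hr

theorem exists_closedBall_cover_tsum_ediam_pow_le (R : Set E) {δ : ℝ} (hδ : 0 < δ) :
    ∃ (t : Set E) (r : E → ℝ), t.Countable ∧ R ⊆ ⋃ x ∈ t, closedBall x (r x) ∧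
      (∀ x ∈ t, ediam (closedBall x (r x)) ≤ ENNReal.ofReal (2 * δ)) ∧
      ∑' x : t, μ (closedBall 0 2⁻¹) * ediam (closedBall (x : E) (r x)) ^ finrank ℝ E ≤
        μ R + ENNReal.ofReal δ := by
  obtain ⟨t, r, ht, -, hr, hcover, hsum⟩ := Besicovitch.exists_closedBall_covering_tsum_measure_le μ
    (ENNReal.ofReal_pos.2 hδ).ne' (fun _ => Ioo 0 δ) R fun _ _ η hη => by
      simpa only [Ioo_inter_Ioo, nonempty_Ioo, max_self] using lt_min hδ hη
  refine ⟨t, r, ht, hcover, fun x hx => ?_, (ENNReal.tsum_le_tsum fun x => ?_).trans hsum⟩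
  · refine (ediam_closedBall_le_ofReal x (hr x hx).1.le).trans ?_
    gcongr
    exact (hr x hx).2.le
  · exact mul_ediam_closedBall_pow_le μ x (hr x x.2).1.le

theorem mul_hausdorffMeasure_le_measure (R : Set E) :
    μ (closedBall 0 2⁻¹) * μH[finrank ℝ E] R ≤ μ R := by
  set c := μ (closedBall (0 : E) 2⁻¹)
  have hc₀ : c ≠ 0 := (measure_closedBall_pos μ _ (by positivity)).ne'
  have hc : c ≠ ∞ := measure_closedBall_lt_top.ne
  let δ (k : ℕ) : ℝ := 1 / (k + 1)
  have hδ : Tendsto δ atTop (𝓝 0) := tendsto_one_div_add_atTop_nhds_zero_nat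
  choose t r ht hcover hdiam hsum using fun k =>
    exists_closedBall_cover_tsum_ediam_pow_le μ R (δ := δ k) Nat.one_div_pos_of_nat
  have (k : ℕ) : Countable (t k) := (ht k).to_subtype
  have hdiam_tendsto : Tendsto (fun k => ENNReal.ofReal (2 * δ k)) atTop (𝓝 0) := by
    simpa using ENNReal.tendsto_ofReal (hδ.const_mul 2)
  have hbound_tendsto : Tendsto (fun k => (μ R + ENNReal.ofReal (δ k)) / c) atTop
      (𝓝 (μ R / c)) := by
    refine ENNReal.Tendsto.div_const ?_ (Or.inr hc₀)
    simpa using tendsto_const_nhds.add (ENNReal.tendsto_ofReal hδ)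
  rw [mul_comm, ← ENNReal.le_div_iff_mul_le (Or.inl hc₀) (Or.inl hc)]
  calc μH[finrank ℝ E] R
      ≤ liminf (fun k => ∑' x : t k, ediam (closedBall x.1 (r k x)) ^ (finrank ℝ E : ℝ)) atTop :=
        Measure.hausdorffMeasure_le_liminf_tsum _ R _ hdiam_tendsto _
          (.of_forall fun k x => hdiam k x x.2)
          (.of_forall fun k => (hcover k).trans_eq (biUnion_eq_iUnion _ _))
    _ ≤ liminf (fun k => (μ R + ENNReal.ofReal (δ k)) / c) atTop := by
        refine liminf_le_liminf (.of_forall fun k => ?_)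
        simp only [ENNReal.rpow_natCast]
        rw [ENNReal.le_div_iff_mul_le (Or.inl hc₀) (Or.inl hc), mul_comm, ← ENNReal.tsum_mul_left]
        exact hsum k
    _ = μ R / c := hbound_tendsto.liminf_eq

theorem volume_eq_hausdorff_measure_normalized_general (R : Set E) :
    μ R = μ (closedBall 0 1) / 2 ^ finrank ℝ E * μH[finrank ℝ E] R := by
  rw [← measure_closedBall_inv_two]
  exact le_antisymm (measure_le_mul_hausdorffMeasure μ R) (mul_hausdorffMeasure_le_measure μ R)

end NormedSpace

end

/-- **Lebesgue measure versus Hausdorff measure in `ℝⁿ`.** For any Borel set `R` in the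
`n`-dimensional Euclidean space, `vol R = (ω_n / 2ⁿ) · μH^n R`, where `ω_n` is the Lebesgue
measure of the unit ball. -/
theorem volume_eq_hausdorff_measure_normalized
    (n : ℕ) (R : Set (EuclideanSpace ℝ (Fin n))) (hR : MeasurableSet R) :
    volume R
      = (volume (Metric.closedBall (0 : EuclideanSpace ℝ (Fin n)) 1) / 2 ^ n)
        * μH[(n : ℝ)] R := by
  simpa only [finrank_euclideanSpace_fin] using
    volume_eq_hausdorff_measure_normalized_general volume R
end

section
/- Let g be a continuous Riemannian metric on the unit square [0,1]², and suppose that every Lipschitz curve joining the two opposite vertical sides {0}×[0,1] and {1}×[0,1] has g-length at least 1, and every Lipschitz curve joining the two opposite horizontal sides [0,1]×{0} and [0,1]×{1} has g-length at least 1. Then the g-area of the square, ∫_{[0,1]²} √(det g), is at least 1. -/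
open MeasureTheory Matrix intervalIntegral

/-- The `g`-length of a curve `γ : ℝ → ℝ²` (restricted to `[0,1]`) with respect to a
Riemannian metric `g`, given pointwise by a `2 × 2` matrix. -/
noncomputable def gLength2 (g : (Fin 2 → ℝ) → Matrix (Fin 2) (Fin 2) ℝ)
    (γ : ℝ → (Fin 2 → ℝ)) : ℝ :=
  ∫ t in (0:ℝ)..1, Real.sqrt ((deriv γ t) ⬝ᵥ (g (γ t)).mulVec (deriv γ t))

/-!
Let `u` and `v` be the `g`-distances in the square to the sides `x₀ = 0` and `x₁ = 0`, truncated
at `1`. Their differentials have `g`-norm at most `1`, so Hadamard's inequality, applied in a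
`g`-orthonormal frame, gives `det D(u, v) ≤ √(det g)` almost everywhere. The integral of
`det D(u, v)` is a null Lagrangian: it depends only on the boundary behaviour of `u` and `v`. Since
each side pair is at distance at least `1`, `u` is `0` on one side and `1` on the opposite one, as
the coordinate `x₀` is, and likewise for `v`; hence the integral equals that of
`det D(x₀, x₁) = 1`.
-/

open Set Filter Topology Metric
open scoped NNReal

section NullLagrangian

variable {E : Type*} [NormedAddCommGroup E] [NormedSpace ℝ E] {f h : E → ℝ} {C D : ℝ≥0}

theorem lineDeriv_comp_add_right (f : E → ℝ) (a x v : E) :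
    lineDeriv ℝ (fun y => f (y + a)) x v = lineDeriv ℝ f (x + a) v := by
  simp only [lineDeriv, add_right_comm]

theorem exists_lipschitzWith_hasCompactSupport_eqOn_closedBall [FiniteDimensional ℝ E]
    (hf : LipschitzWith C f) (r : ℝ) :
    ∃ f' : E → ℝ, (∃ C', LipschitzWith C' f') ∧ HasCompactSupport f' ∧
      tsupport f' ⊆ tsupport f ∧ EqOn f' f (closedBall 0 r) := by
  obtain ⟨M, hM⟩ := (isCompact_closedBall (0 : E) r).exists_bound_of_continuousOn
    hf.continuous.continuousOn
  -- Clip `f` between `-φ` and `φ` for a cone `φ` that dominates `|f|` on the ball.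
  set φ : E → ℝ := fun x => max 0 (|M| + r - ‖x‖)
  have φ_lipschitz : LipschitzWith 1 φ := by
    simpa using ((LipschitzWith.const (|M| + r)).sub lipschitzWith_one_norm).const_max 0
  have φ_nonneg (x) : 0 ≤ φ x := le_max_left _ _
  refine ⟨fun x => max (-φ x) (min (f x) (φ x)), ⟨_, φ_lipschitz.neg.max (hf.min φ_lipschitz)⟩,
    .intro (isCompact_closedBall 0 (|M| + r)) fun x hx => ?_,
    closure_mono (Function.support_subset_iff'.2 fun x hx => ?_), fun x hx => ?_⟩
  · have : φ x = 0 := max_eq_left (by rw [mem_closedBall_zero_iff, not_le] at hx; linarith)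
    simp [this]
  · simp [Function.notMem_support.1 hx, φ_nonneg x]
  · have hfφ : |f x| ≤ φ x := (hM x hx).trans <| by
      rw [mem_closedBall_zero_iff] at hx
      exact le_max_of_le_right (by linarith [le_abs_self M])
    simp only [min_eq_left (le_of_abs_le hfφ), max_eq_right (neg_le_of_abs_le hfφ)]

variable [MeasurableSpace E] [BorelSpace E] {μ : Measure E} [μ.IsAddHaarMeasure]

theorem integrable_comp_add_right_mul_lineDeriv (hf : LipschitzWith C f)
    (hf' : HasCompactSupport f) (hh : LipschitzWith D h) (a w : E) :
    Integrable (fun x => f (x + a) * lineDeriv ℝ h x w) μ :=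
  ((hf.continuous.comp (continuous_add_const a)).integrable_of_hasCompactSupport
    (hf'.comp_homeomorph (Homeomorph.addRight a))).mul_of_top_left (hh.memLp_lineDeriv w)

variable [FiniteDimensional ℝ E]

theorem integral_comp_sub_mul_lineDeriv (hf : LipschitzWith C f) (hh : LipschitzWith D h)
    (hh' : HasCompactSupport h) (a w : E) :
    ∫ x, h (x - a) * lineDeriv ℝ f x w ∂μ = ∫ x, f (x + a) * lineDeriv ℝ h x (-w) ∂μ := by
  have hτ : LipschitzWith D fun x => h (x + -a) := by
    simpa only [mul_one, Function.comp_def] using hh.comp (isometry_add_right (-a)).lipschitz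
  have hτ' : HasCompactSupport fun x => h (x + -a) :=
    hh'.comp_homeomorph (Homeomorph.addRight (-a))
  calc ∫ x, h (x - a) * lineDeriv ℝ f x w ∂μ
      = ∫ x, lineDeriv ℝ f x w * h (x + -a) ∂μ := by simp only [mul_comm, sub_eq_add_neg]
    _ = ∫ x, lineDeriv ℝ h (x + -a) (-w) * f x ∂μ := by
      simp only [hf.integral_lineDeriv_mul_eq hτ hτ', lineDeriv_comp_add_right]
    _ = ∫ x, f (x + a) * lineDeriv ℝ h x (-w) ∂μ := by
      rw [← integral_add_right_eq_self _ a]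
      simp [mul_comm]

theorem integrable_lineDeriv_of_hasCompactSupport (hf : LipschitzWith C f)
    (hf' : HasCompactSupport f) (v : E) : Integrable (fun x => lineDeriv ℝ f x v) μ := by
  refine (integrableOn_iff_integrable_of_support_subset fun x hx => ?_).1
    ((hf.locallyIntegrable_lineDeriv v).integrableOn_isCompact hf')
  by_contra hx'
  rw [notMem_tsupport_iff_eventuallyEq] at hx'
  exact hx (hx'.lineDeriv_eq.trans (deriv_const 0 0))

theorem integral_sub_mul_lineDeriv_comm (hf : LipschitzWith C f) (hf' : HasCompactSupport f)
    (hh : LipschitzWith D h) (hh' : HasCompactSupport h) (a w : E) :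
    ∫ x, (f (x + a) - f x) * lineDeriv ℝ h x (-w) ∂μ =
      ∫ x, (h (x + -a) - h x) * lineDeriv ℝ f x w ∂μ := by
  have shift (b : E) := integral_comp_sub_mul_lineDeriv (μ := μ) hf hh hh' b w
  have int_f (b : E) := integrable_comp_add_right_mul_lineDeriv (μ := μ) hf hf' hh b (-w)
  have int_h (b : E) := integrable_comp_add_right_mul_lineDeriv (μ := μ) hh hh' hf b w
  have shift_zero := shift 0
  have int_f_zero := int_f 0
  have int_h_zero := int_h 0
  simp only [sub_zero, add_zero] at shift_zero int_f_zero int_h_zero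
  simp only [sub_mul]
  rw [MeasureTheory.integral_sub (int_f a) int_f_zero,
    MeasureTheory.integral_sub (int_h (-a)) int_h_zero, ← shift a, shift_zero]
  simp only [sub_eq_add_neg]

theorem integral_lineDeriv_mul_lineDeriv_comm (hf : LipschitzWith C f) (hf' : HasCompactSupport f)
    (hh : LipschitzWith D h) (hh' : HasCompactSupport h) (v w : E) :
    ∫ x, lineDeriv ℝ f x v * lineDeriv ℝ h x w ∂μ =
      ∫ x, lineDeriv ℝ f x w * lineDeriv ℝ h x v ∂μ := by
  -- `f` and `h` have no second derivatives to exchange; translation invariance of `μ` exchanges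
  -- difference quotients instead.
  have quotient_comm (t : ℝ) :
      ∫ x, (t⁻¹ • (f (x + t • v) - f x)) * lineDeriv ℝ h x (-w) ∂μ =
        ∫ x, (t⁻¹ • (h (x + t • -v) - h x)) * lineDeriv ℝ f x w ∂μ := by
    simp only [smul_eq_mul, mul_assoc, MeasureTheory.integral_const_mul, smul_neg,
      integral_sub_mul_lineDeriv_comm hf hf' hh hh']
  have lim_f := hf.integral_inv_smul_sub_mul_tendsto_integral_lineDeriv_mul
    (integrable_lineDeriv_of_hasCompactSupport (μ := μ) hh hh' (-w)) v
  have lim_h := hh.integral_inv_smul_sub_mul_tendsto_integral_lineDeriv_mul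
    (integrable_lineDeriv_of_hasCompactSupport (μ := μ) hf hf' w) (-v)
  simp only [quotient_comm] at lim_f
  have := tendsto_nhds_unique lim_f lim_h
  simp only [lineDeriv_neg, mul_neg, neg_mul, MeasureTheory.integral_neg, neg_inj] at this
  simpa only [mul_comm] using this

theorem lineDeriv_ae_eq_fderiv (hf : LipschitzWith C f) (v : E) :
    (fun x => lineDeriv ℝ f x v) =ᵐ[μ] fun x => fderiv ℝ f x v := by
  filter_upwards [hf.ae_differentiableAt] with x hx using hx.lineDeriv_eq_fderiv

theorem integral_fderiv_mul_fderiv_comm_of_hasCompactSupport (hf : LipschitzWith C f)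
    (hf' : HasCompactSupport f) (hh : LipschitzWith D h) (hh' : HasCompactSupport h) (v w : E) :
    ∫ x, fderiv ℝ f x v * fderiv ℝ h x w ∂μ = ∫ x, fderiv ℝ f x w * fderiv ℝ h x v ∂μ := by
  have integral_eq (v w : E) : ∫ x, lineDeriv ℝ f x v * lineDeriv ℝ h x w ∂μ =
      ∫ x, fderiv ℝ f x v * fderiv ℝ h x w ∂μ :=
    integral_congr_ae ((lineDeriv_ae_eq_fderiv hf v).mul (lineDeriv_ae_eq_fderiv hh w))
  rw [← integral_eq, ← integral_eq, integral_lineDeriv_mul_lineDeriv_comm hf hf' hh hh']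

theorem integrable_fderiv_mul_fderiv (hf : LipschitzWith C f) (hh : LipschitzWith D h)
    (hb : Bornology.IsBounded (Function.support (fderiv ℝ f) ∩ Function.support (fderiv ℝ h)))
    (v w : E) : Integrable (fun x => fderiv ℝ f x v * fderiv ℝ h x w) μ := by
  refine (integrableOn_iff_integrable_of_support_subset fun x hx => ?_).1
    (Measure.integrableOn_of_bounded (M := C * ‖v‖ * (D * ‖w‖)) hb.measure_lt_top.ne ?_ ?_)
  · exact ⟨fun h0 => hx (by simp [h0]), fun h0 => hx (by simp [h0])⟩
  · exact ((measurable_fderiv_apply_const ℝ f v).mul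
      (measurable_fderiv_apply_const ℝ h w)).aestronglyMeasurable
  · refine .of_forall fun x => ?_
    rw [norm_mul]
    gcongr
    · exact (fderiv ℝ f x).le_of_opNorm_le (norm_fderiv_le_of_lipschitz ℝ hf) v
    · exact (fderiv ℝ h x).le_of_opNorm_le (norm_fderiv_le_of_lipschitz ℝ hh) w

theorem integral_fderiv_mul_fderiv_comm (hf : LipschitzWith C f) (hh : LipschitzWith D h)
    (hb : Bornology.IsBounded (tsupport f ∩ Function.support (fderiv ℝ h))) (v w : E) :
    ∫ x, fderiv ℝ f x v * fderiv ℝ h x w ∂μ = ∫ x, fderiv ℝ f x w * fderiv ℝ h x v ∂μ := by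
  have fderiv_eq {k k' : E → ℝ} {r : ℝ} (hk : EqOn k' k (closedBall 0 (r + 1))) {x : E}
      (hx : x ∈ closedBall 0 r) : fderiv ℝ k' x = fderiv ℝ k x := by
    refine (hk.eventuallyEq_of_mem (mem_of_superset (isOpen_ball.mem_nhds ?_)
      ball_subset_closedBall)).fderiv_eq
    exact closedBall_subset_ball (lt_add_one r) hx
  have fderiv_zero {k : E → ℝ} {x : E} (hx : x ∉ tsupport k) : fderiv ℝ k x = 0 :=
    Function.notMem_support.1 fun h0 => hx (support_fderiv_subset ℝ h0)
  obtain ⟨r, hr⟩ := hb.subset_closedBall 0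
  obtain ⟨f', ⟨C', hf'⟩, f'_compact, f'_supp, f'_eq⟩ :=
    exists_lipschitzWith_hasCompactSupport_eqOn_closedBall hf (r + 1)
  obtain ⟨R, hR⟩ := f'_compact.isCompact.isBounded.subset_closedBall 0
  obtain ⟨h', ⟨D', hh'⟩, h'_compact, -, h'_eq⟩ :=
    exists_lipschitzWith_hasCompactSupport_eqOn_closedBall hh (R + 1)
  -- `f` may be cut off far from the region where both factors live, and `h` then only matters on
  -- the compact support of `f'`.
  have integrand_eq (x a b : E) :
      fderiv ℝ f' x a * fderiv ℝ h' x b = fderiv ℝ f x a * fderiv ℝ h x b := by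
    by_cases hx' : x ∈ tsupport f'
    · rw [fderiv_eq h'_eq (hR hx')]
      by_cases hxh : fderiv ℝ h x = 0
      · simp [hxh]
      · rw [fderiv_eq f'_eq (hr ⟨f'_supp hx', hxh⟩)]
    · rw [fderiv_zero hx']
      by_cases hxf : x ∈ tsupport f
      · by_cases hxh : fderiv ℝ h x = 0
        · simp [hxh]
        · rw [← fderiv_eq f'_eq (hr ⟨hxf, hxh⟩), fderiv_zero hx']
          simp
      · simp [fderiv_zero hxf]
  simpa only [integrand_eq] using integral_fderiv_mul_fderiv_comm_of_hasCompactSupport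
    (μ := μ) hf' f'_compact hh' h'_compact v w

end NullLagrangian

section Clamp

variable {ι : Type*}

/-- The nearest-point retraction of `ι → ℝ` onto the unit cube, acting coordinatewise. -/
noncomputable def clamp (p : ι → ℝ) (i : ι) : ℝ := projIcc (0 : ℝ) 1 zero_le_one (p i)

theorem clamp_mem (p : ι → ℝ) : clamp p ∈ Icc (0 : ι → ℝ) 1 :=
  ⟨fun i => (projIcc _ _ _ (p i)).2.1, fun i => (projIcc _ _ _ (p i)).2.2⟩

theorem clamp_of_mem {p : ι → ℝ} (hp : p ∈ Icc (0 : ι → ℝ) 1) : clamp p = p :=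
  funext fun i => congrArg Subtype.val (projIcc_of_mem zero_le_one ⟨hp.1 i, hp.2 i⟩)

theorem clamp_apply_of_le_zero {p : ι → ℝ} {i : ι} (hp : p i ≤ 0) : clamp p i = 0 :=
  congrArg Subtype.val (projIcc_of_le_left zero_le_one hp)

theorem clamp_apply_of_one_le {p : ι → ℝ} {i : ι} (hp : 1 ≤ p i) : clamp p i = 1 :=
  congrArg Subtype.val (projIcc_of_right_le zero_le_one hp)

theorem fderiv_clamp_apply {p : ι → ℝ} (hp : ∀ i, p i ∈ Ioo 0 1) (i : ι) :
    fderiv ℝ (fun q => clamp q i) p = ContinuousLinearMap.proj i := by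
  have : (fun q : ι → ℝ => clamp q i) =ᶠ[𝓝 p] fun q => q i :=
    ((isOpen_Ioo.preimage (continuous_apply i)).eventually_mem (hp i)).mono fun q hq =>
      congrArg Subtype.val (projIcc_of_mem zero_le_one (Ioo_subset_Icc_self hq))
  rw [this.fderiv_eq, (hasFDerivAt_apply i p).fderiv]

theorem lipschitzWith_clamp [Fintype ι] : LipschitzWith 1 (clamp : (ι → ℝ) → ι → ℝ) :=
  LipschitzWith.of_dist_le_mul fun p q => (dist_pi_le_iff (by positivity)).2 fun i =>
    ((LipschitzWith.projIcc zero_le_one).dist_le_mul (p i) (q i)).trans <| by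
      gcongr
      exact dist_le_pi_dist p q i

end Clamp

section Ramp

/-- A Lipschitz function on `ι → ℝ` that equals `0` below the slab `0 ≤ p i ≤ 1` and `1` above it:
the class of functions whose Jacobian integral depends only on their boundary behaviour. -/
structure IsRamp {ι : Type*} [Fintype ι] (i : ι) (u : (ι → ℝ) → ℝ) : Prop where
  exists_lipschitzWith : ∃ K, LipschitzWith K u
  eq_zero : ∀ p, p i ≤ 0 → u p = 0
  eq_one : ∀ p, 1 ≤ p i → u p = 1

variable {ι : Type*} [Fintype ι] {i : ι} {u u' : (ι → ℝ) → ℝ}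

theorem isRamp_clamp (i : ι) : IsRamp i fun p => clamp p i where
  exists_lipschitzWith := ⟨_, (LipschitzWith.eval i).comp lipschitzWith_clamp⟩
  eq_zero _ := clamp_apply_of_le_zero
  eq_one _ := clamp_apply_of_one_le

namespace IsRamp

theorem support_fderiv_subset (hu : IsRamp i u) :
    Function.support (fderiv ℝ u) ⊆ {p | p i ∈ Icc 0 1} := by
  refine Function.support_subset_iff'.2 fun p hp => ?_
  have continuous_apply_i := continuous_apply (A := fun _ : ι => ℝ) i
  suffices ∃ c, u =ᶠ[𝓝 p] fun _ => c by
    obtain ⟨c, hc⟩ := this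
    rw [hc.fderiv_eq, fderiv_fun_const, Pi.zero_apply]
  rcases not_and_or.1 hp with hp | hp
  · exact ⟨0, ((isOpen_Iio.preimage continuous_apply_i).eventually_mem (not_le.1 hp)).mono
      fun q hq => hu.eq_zero q (le_of_lt hq)⟩
  · exact ⟨1, ((isOpen_Ioi.preimage continuous_apply_i).eventually_mem (not_le.1 hp)).mono
      fun q hq => hu.eq_one q (le_of_lt hq)⟩

theorem tsupport_sub_subset (hu : IsRamp i u) (hu' : IsRamp i u') :
    tsupport (u - u') ⊆ {p | p i ∈ Icc 0 1} := by
  refine closure_minimal (fun p hp => ?_) (isClosed_Icc.preimage (continuous_apply i))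
  by_contra hpi
  rcases not_and_or.1 hpi with hpi | hpi
  · exact hp (by simp [hu.eq_zero p (not_le.1 hpi).le, hu'.eq_zero p (not_le.1 hpi).le])
  · exact hp (by simp [hu.eq_one p (not_le.1 hpi).le, hu'.eq_one p (not_le.1 hpi).le])

end IsRamp

end Ramp

section Jacobian

/-- The Jacobian determinant at `p` of the map `(u, v)` from the plane to itself. -/
noncomputable def jacobianDet (u v : (Fin 2 → ℝ) → ℝ) (p : Fin 2 → ℝ) : ℝ :=
  fderiv ℝ u p (Pi.single 0 1) * fderiv ℝ v p (Pi.single 1 1) -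
    fderiv ℝ u p (Pi.single 1 1) * fderiv ℝ v p (Pi.single 0 1)

theorem jacobianDet_swap (u v : (Fin 2 → ℝ) → ℝ) (p : Fin 2 → ℝ) :
    jacobianDet u v p = -jacobianDet v u p := by
  simp only [jacobianDet]
  ring

variable {i j : Fin 2} {u u' v v' : (Fin 2 → ℝ) → ℝ}

theorem isBounded_slab_inter_slab (hij : i ≠ j) :
    Bornology.IsBounded ({p : Fin 2 → ℝ | p i ∈ Icc 0 1} ∩ {p | p j ∈ Icc 0 1}) := by
  refine (isBounded_Icc (0 : Fin 2 → ℝ) 1).subset fun p ⟨hi, hj⟩ => ?_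
  have hp (k : Fin 2) : p k ∈ Icc 0 1 := by
    obtain rfl | rfl : k = i ∨ k = j := by lia
    exacts [hi, hj]
  exact ⟨fun k => (hp k).1, fun k => (hp k).2⟩

theorem integrable_jacobianDet (hij : i ≠ j) (hu : IsRamp i u) (hv : IsRamp j v) :
    Integrable (jacobianDet u v) := by
  obtain ⟨_, hu_lip⟩ := hu.exists_lipschitzWith
  obtain ⟨_, hv_lip⟩ := hv.exists_lipschitzWith
  have int_mul (a b : Fin 2 → ℝ) := integrable_fderiv_mul_fderiv (μ := volume) hu_lip hv_lip
    ((isBounded_slab_inter_slab hij).subset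
      (inter_subset_inter hu.support_fderiv_subset hv.support_fderiv_subset)) a b
  exact (int_mul _ _).sub (int_mul _ _)

theorem integral_jacobianDet_eq_zero {C D : ℝ≥0} (hu : LipschitzWith C u) (hv : LipschitzWith D v)
    (hb : Bornology.IsBounded (tsupport u ∩ Function.support (fderiv ℝ v))) :
    ∫ p, jacobianDet u v p = 0 := by
  have int_mul (a b : Fin 2 → ℝ) := integrable_fderiv_mul_fderiv (μ := volume) hu hv
    (hb.subset (inter_subset_inter_left _ (support_fderiv_subset ℝ))) a b
  simp only [jacobianDet]
  rw [MeasureTheory.integral_sub (int_mul _ _) (int_mul _ _), sub_eq_zero]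
  exact integral_fderiv_mul_fderiv_comm hu hv hb _ _

theorem integral_jacobianDet_congr_left (hij : i ≠ j) (hu : IsRamp i u) (hu' : IsRamp i u')
    (hv : IsRamp j v) : ∫ p, jacobianDet u v p = ∫ p, jacobianDet u' v p := by
  obtain ⟨_, hu_lip⟩ := hu.exists_lipschitzWith
  obtain ⟨_, hu'_lip⟩ := hu'.exists_lipschitzWith
  obtain ⟨_, hv_lip⟩ := hv.exists_lipschitzWith
  have jacobianDet_sub : (fun p => jacobianDet u v p - jacobianDet u' v p) =ᵐ[volume]
      jacobianDet (u - u') v := by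
    filter_upwards [hu_lip.ae_differentiableAt, hu'_lip.ae_differentiableAt] with p hp hp'
    simp only [jacobianDet, fderiv_sub hp hp', _root_.sub_apply]
    ring
  rw [← sub_eq_zero, ← MeasureTheory.integral_sub (integrable_jacobianDet hij hu hv)
    (integrable_jacobianDet hij hu' hv), integral_congr_ae jacobianDet_sub]
  exact integral_jacobianDet_eq_zero (hu_lip.sub hu'_lip) hv_lip
    ((isBounded_slab_inter_slab hij).subset
      (inter_subset_inter (hu.tsupport_sub_subset hu') hv.support_fderiv_subset))

theorem integral_jacobianDet_congr (hij : i ≠ j) (hu : IsRamp i u) (hu' : IsRamp i u')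
    (hv : IsRamp j v) (hv' : IsRamp j v') :
    ∫ p, jacobianDet u v p = ∫ p, jacobianDet u' v' p := by
  rw [integral_jacobianDet_congr_left hij hu hu' hv]
  simp only [jacobianDet_swap u', MeasureTheory.integral_neg]
  rw [integral_jacobianDet_congr_left hij.symm hv hv' hu']

theorem jacobianDet_eq_zero_of_notMem_Icc (hu : IsRamp 0 u) (hv : IsRamp 1 v) {p : Fin 2 → ℝ}
    (hp : p ∉ Icc 0 1) : jacobianDet u v p = 0 := by
  by_cases hp0 : p 0 ∈ Icc 0 1
  · have hp1 : p 1 ∉ Icc 0 1 := fun hp1 =>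
      hp ⟨Fin.forall_fin_two.2 ⟨hp0.1, hp1.1⟩, Fin.forall_fin_two.2 ⟨hp0.2, hp1.2⟩⟩
    simp [jacobianDet, Function.notMem_support.1 fun h => hp1 (hv.support_fderiv_subset h)]
  · simp [jacobianDet, Function.notMem_support.1 fun h => hp0 (hu.support_fderiv_subset h)]

theorem setIntegral_Icc_jacobianDet_clamp :
    ∫ p in Icc 0 1, jacobianDet (clamp · 0) (clamp · 1) p = 1 := by
  have Ioo_ae_eq_Icc : univ.pi (fun _ : Fin 2 => Ioo (0 : ℝ) 1) =ᵐ[volume] Icc 0 1 :=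
    Measure.univ_pi_Ioo_ae_eq_Icc
  rw [← setIntegral_congr_set Ioo_ae_eq_Icc]
  have jacobianDet_eq : EqOn (jacobianDet (clamp · 0) (clamp · 1)) 1
      (univ.pi fun _ => Ioo 0 1) := fun p hp => by
    have hp' (i : Fin 2) : p i ∈ Ioo 0 1 := hp i (mem_univ i)
    simp [jacobianDet, fderiv_clamp_apply hp']
  rw [setIntegral_congr_fun (MeasurableSet.univ_pi fun _ => measurableSet_Ioo) jacobianDet_eq]
  simp [Measure.real, Real.volume_pi_Ioo]

theorem setIntegral_Icc_jacobianDet (hu : IsRamp 0 u) (hv : IsRamp 1 v) :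
    ∫ p in Icc 0 1, jacobianDet u v p = 1 := by
  have setIntegral_eq {u v} (hu : IsRamp 0 u) (hv : IsRamp 1 v) :
      ∫ p in Icc 0 1, jacobianDet u v p = ∫ p, jacobianDet u v p :=
    setIntegral_eq_integral_of_forall_compl_eq_zero fun _ => jacobianDet_eq_zero_of_notMem_Icc hu hv
  rw [setIntegral_eq hu hv, integral_jacobianDet_congr zero_ne_one hu (isRamp_clamp 0) hv
    (isRamp_clamp 1), ← setIntegral_eq (isRamp_clamp 0) (isRamp_clamp 1),
    setIntegral_Icc_jacobianDet_clamp]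

end Jacobian

section DetBound

theorem abs_det_le_prod_norm_row {n : ℕ} (A : Matrix (Fin n) (Fin n) ℝ) :
    |A.det| ≤ ∏ i, ‖WithLp.toLp 2 (A i)‖ := by
  have : Fact (Module.finrank ℝ (EuclideanSpace ℝ (Fin n)) = n) := ⟨by simp⟩
  let b := EuclideanSpace.basisFun (Fin n) ℝ
  have basis_det : b.toBasis.det (fun i => WithLp.toLp 2 (A i)) = A.det := by
    rw [Module.Basis.det_apply, ← det_transpose A]
    congr 1
  rw [← basis_det, ← b.toBasis.orientation.volumeForm_robust' b]
  exact b.toBasis.orientation.abs_volumeForm_apply_le _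

variable {n : ℕ} {G A : Matrix (Fin n) (Fin n) ℝ}

theorem det_eq_zero_of_row_le_sqrt (hG : G.det = 0)
    (hA : ∀ i w, A i ⬝ᵥ w ≤ √(w ⬝ᵥ G *ᵥ w)) : A.det = 0 := by
  obtain ⟨w, w_ne, hw⟩ := exists_mulVec_eq_zero_iff.2 hG
  refine exists_mulVec_eq_zero_iff.1 ⟨w, w_ne, funext fun i => le_antisymm ?_ ?_⟩
  · simpa [hw, mulVec] using hA i w
  · simpa [hw, mulVec, mulVec_neg] using hA i (-w)

theorem norm_toLp_eq_sqrt_dotProduct_self (x : Fin n → ℝ) :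
    ‖WithLp.toLp 2 x‖ = √(x ⬝ᵥ x) := by
  simp [EuclideanSpace.norm_eq, dotProduct, sq]

theorem sqrt_dotProduct_star_mul_self_mulVec (B : Matrix (Fin n) (Fin n) ℝ) (w : Fin n → ℝ) :
    √(w ⬝ᵥ (star B * B) *ᵥ w) = ‖WithLp.toLp 2 (B *ᵥ w)‖ := by
  rw [norm_toLp_eq_sqrt_dotProduct_self, star_eq_conjTranspose,
    conjTranspose_eq_transpose_of_trivial, ← mulVec_mulVec, dotProduct_mulVec, vecMul_transpose]

theorem norm_vecMul_inv_le_one {B : Matrix (Fin n) (Fin n) ℝ} (hB : IsUnit B.det)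
    {a : Fin n → ℝ} (ha : ∀ w, a ⬝ᵥ w ≤ ‖WithLp.toLp 2 (B *ᵥ w)‖) :
    ‖WithLp.toLp 2 (a ᵥ* B⁻¹)‖ ≤ 1 := by
  set c := a ᵥ* B⁻¹
  have dotProduct_self_le := ha (B⁻¹ *ᵥ c)
  rw [mulVec_mulVec, mul_nonsing_inv _ hB, one_mulVec, dotProduct_mulVec,
    norm_toLp_eq_sqrt_dotProduct_self] at dotProduct_self_le
  rw [norm_toLp_eq_sqrt_dotProduct_self]
  exact Real.sqrt_le_one.2 (not_lt.1 fun h =>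
    dotProduct_self_le.not_gt (Real.sqrt_lt_self_iff.2 h))

theorem det_le_sqrt_det_of_row_le_sqrt (hG : G.PosSemidef)
    (hA : ∀ i w, A i ⬝ᵥ w ≤ √(w ⬝ᵥ G *ᵥ w)) : A.det ≤ √G.det := by
  obtain hdet | hdet := eq_or_ne G.det 0
  · simp [det_eq_zero_of_row_le_sqrt hdet hA]
  open scoped MatrixOrder in
  obtain ⟨B, rfl⟩ := CStarAlgebra.nonneg_iff_eq_star_mul_self.mp hG.nonneg
  have det_G : (star B * B).det = B.det ^ 2 := by
    simp [star_eq_conjTranspose, sq]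
  have B_unit : IsUnit B.det := isUnit_iff_ne_zero.2 fun h => hdet (by simp [det_G, h])
  have row_norm_le (i : Fin n) : ‖WithLp.toLp 2 ((A * B⁻¹) i)‖ ≤ 1 := by
    exact norm_vecMul_inv_le_one B_unit fun w => (hA i w).trans_eq
      (sqrt_dotProduct_star_mul_self_mulVec B w)
  have A_eq : A = A * B⁻¹ * B := by
    rw [Matrix.mul_assoc, nonsing_inv_mul _ B_unit, Matrix.mul_one]
  calc A.det = (A * B⁻¹).det * B.det := by rw [← det_mul, ← A_eq]
    _ ≤ |(A * B⁻¹).det| * |B.det| := by rw [← abs_mul]; exact le_abs_self _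
    _ ≤ 1 * |B.det| := by
      gcongr
      exact (abs_det_le_prod_norm_row _).trans
        (Finset.prod_le_one (fun _ _ => norm_nonneg _) fun i _ => row_norm_le i)
    _ = √(star B * B).det := by rw [one_mul, det_G, Real.sqrt_sq_eq_abs]

end DetBound
section CurveLength

variable {E : Type*} [NormedAddCommGroup E] [NormedSpace ℝ E]

/-- A length density on `E`: a continuous field `F x` of nonnegative, positively homogeneous
functions on tangent vectors. It need not vanish only at `0`, be convex or be symmetric. -/
structure IsLengthDensity (F : E → E → ℝ) : Prop where
  continuous : Continuous (Function.uncurry F)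
  nonneg : ∀ x w, 0 ≤ F x w
  map_smul : ∀ x w, ∀ c : ℝ, 0 ≤ c → F x (c • w) = c * F x w

/-- The length of the curve `γ`, restricted to `[a, b]`, with respect to the length density `F`. -/
noncomputable def curveLength (F : E → E → ℝ) (γ : ℝ → E) (a b : ℝ) : ℝ :=
  ∫ t in a..b, F (γ t) (deriv γ t)

/-- The length of the straight segment from `p` to `q` with respect to `F`. -/
noncomputable def segmentLength (F : E → E → ℝ) (p q : E) : ℝ :=
  curveLength F (AffineMap.lineMap p q) 0 1

/-- The curve which follows `γ` up to time `T` and then the segment from `γ T` to `q` during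
`[T, T + 1]`; written without case distinction so that it is visibly Lipschitz. -/
noncomputable def appendSegment (γ : ℝ → E) (T : ℝ) (q : E) (t : ℝ) : E :=
  γ (min t T) - γ T + AffineMap.lineMap (γ T) q (projIcc (0 : ℝ) 1 zero_le_one (t - T) : ℝ)

/-- The lengths of the Lipschitz curves inside `K` from a point of `A` to `p`. The parameter
interval `[0, T]` is arbitrary, which makes concatenation immediate. -/
def reachLengths (F : E → E → ℝ) (K A : Set E) (p : E) : Set ℝ :=
  {L | ∃ T : ℝ, ∃ γ : ℝ → E, 0 ≤ T ∧ (∃ C, LipschitzWith C γ) ∧ MapsTo γ (Icc 0 T) K ∧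
    γ 0 ∈ A ∧ γ T = p ∧ curveLength F γ 0 T = L}

/-- The intrinsic distance in `K` from the set `A` to `p`: the infimum of the lengths of Lipschitz
curves. It is `0` by convention if no such curve exists. -/
noncomputable def pathDist (F : E → E → ℝ) (K A : Set E) (p : E) : ℝ :=
  sInf (reachLengths F K A p)

variable {F : E → E → ℝ} {K A : Set E} {p q : E}

theorem curveLength_congr {γ δ : ℝ → E} {a b : ℝ} (h : EqOn γ δ (uIoo a b)) :
    curveLength F γ a b = curveLength F δ a b :=
  integral_congr_uIoo fun t ht => by
    simp only [h ht, (h.eventuallyEq_of_mem (isOpen_Ioo.mem_nhds ht)).deriv_eq]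

theorem curveLength_comp_sub_right (γ : ℝ → E) (a b c : ℝ) :
    curveLength F (fun t => γ (t - c)) a b = curveLength F γ (a - c) (b - c) := by
  simp only [curveLength, deriv_comp_sub_const]
  exact intervalIntegral.integral_comp_sub_right (fun t => F (γ t) (deriv γ t)) c

theorem segmentLength_eq_integral (F : E → E → ℝ) (p q : E) :
    segmentLength F p q = ∫ t in (0 : ℝ)..1, F (AffineMap.lineMap p q t) (q - p) := by
  simp only [segmentLength, curveLength, AffineMap.hasDerivAt_lineMap.deriv]

theorem appendSegment_of_le {γ : ℝ → E} {T t : ℝ} (ht : t ≤ T) :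
    appendSegment γ T q t = γ t := by
  simp [appendSegment, min_eq_left ht, projIcc_of_le_left _ (sub_nonpos.2 ht)]

theorem appendSegment_of_mem_Icc {γ : ℝ → E} {T t : ℝ} (ht : t - T ∈ Icc 0 1) :
    appendSegment γ T q t = AffineMap.lineMap (γ T) q (t - T) := by
  simp [appendSegment, min_eq_right (sub_nonneg.1 ht.1), projIcc_of_mem _ ht]

theorem exists_lipschitzWith_appendSegment {γ : ℝ → E} {C : ℝ≥0} (hγ : LipschitzWith C γ) (T : ℝ)
    (q : E) : ∃ D, LipschitzWith D (appendSegment γ T q) := by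
  have shift : LipschitzWith 1 fun t : ℝ => t - T := 
    .of_dist_le_mul fun x y => by simp
  exact ⟨_, ((hγ.comp (LipschitzWith.id.min_const T)).sub (.const (γ T))).add
    ((lipschitzWith_lineMap (γ T) q).comp
      ((LipschitzWith.subtype_val _).comp ((LipschitzWith.projIcc zero_le_one).comp shift)))⟩

theorem appendSegment_mem (hK : Convex ℝ K) {γ : ℝ → E} {T : ℝ} (hT : 0 ≤ T)
    (hγ : MapsTo γ (Icc 0 T) K) (hq : q ∈ K) : MapsTo (appendSegment γ T q) (Icc 0 (T + 1)) K := by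
  intro t ht
  obtain h | h := le_total t T
  · rw [appendSegment_of_le h]
    exact hγ ⟨ht.1, h⟩
  · have ht' : t - T ∈ Icc 0 1 := ⟨sub_nonneg.2 h, sub_le_iff_le_add'.2 ht.2⟩
    rw [appendSegment_of_mem_Icc ht']
    exact hK.lineMap_mem (hγ (right_mem_Icc.2 hT)) hq ht'

theorem zero_mem_reachLengths (hp : p ∈ A) (hpK : p ∈ K) : 0 ∈ reachLengths F K A p :=
  ⟨0, fun _ => p, le_rfl, ⟨0, .const p⟩, fun _ _ => hpK, hp, rfl, by simp [curveLength]⟩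

namespace IsLengthDensity

theorem curveLength_comp_mul_left (hF : IsLengthDensity F) (γ : ℝ → E) {T : ℝ} (hT : 0 ≤ T) :
    curveLength F (fun t => γ (T * t)) 0 1 = curveLength F γ 0 T := by
  simp only [curveLength, deriv_comp_mul_left, hF.map_smul _ _ T hT,
    intervalIntegral.integral_const_mul]
  rw [intervalIntegral.mul_integral_comp_mul_left (f := fun t => F (γ t) (deriv γ t)), mul_zero,
    mul_one]

theorem nonneg_of_mem_reachLengths (hF : IsLengthDensity F) {L : ℝ}
    (hL : L ∈ reachLengths F K A p) : 0 ≤ L := by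
  obtain ⟨T, γ, hT, -, -, -, -, rfl⟩ := hL
  exact intervalIntegral.integral_nonneg hT fun t _ => hF.nonneg _ _

theorem bddBelow_reachLengths (hF : IsLengthDensity F) : BddBelow (reachLengths F K A p) :=
  ⟨0, fun _ => hF.nonneg_of_mem_reachLengths⟩

theorem pathDist_nonneg (hF : IsLengthDensity F) : 0 ≤ pathDist F K A p :=
  Real.sInf_nonneg fun _ => hF.nonneg_of_mem_reachLengths

theorem pathDist_eq_zero (hF : IsLengthDensity F) (hp : p ∈ A) (hpK : p ∈ K) :
    pathDist F K A p = 0 :=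
  le_antisymm (csInf_le hF.bddBelow_reachLengths (zero_mem_reachLengths hp hpK)) hF.pathDist_nonneg

theorem segmentLength_le_mul_dist (hF : IsLengthDensity F) (hK : Convex ℝ K) {C : ℝ}
    (hC : ∀ x ∈ K, ∀ w, F x w ≤ C * ‖w‖) (hp : p ∈ K) (hq : q ∈ K) :
    segmentLength F p q ≤ C * dist p q := by
  have bound : ∀ t ∈ uIoc (0 : ℝ) 1, ‖F (AffineMap.lineMap p q t) (q - p)‖ ≤ C * dist p q := by
    intro t ht
    rw [uIoc_of_le zero_le_one] at ht
    rw [Real.norm_of_nonneg (hF.nonneg _ _), dist_comm, dist_eq_norm]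
    exact hC _ (hK.lineMap_mem hp hq (Ioc_subset_Icc_self ht)) _
  rw [segmentLength_eq_integral]
  simpa using (le_abs_self _).trans (intervalIntegral.norm_integral_le_of_norm_le_const bound)

theorem segmentLength_nonneg (hF : IsLengthDensity F) : 0 ≤ segmentLength F p q :=
  intervalIntegral.integral_nonneg zero_le_one fun _ _ => hF.nonneg _ _

theorem fderiv_apply_le (hF : IsLengthDensity F) {f : E → ℝ} {z : E} (hf : DifferentiableAt ℝ f z)
    (hle : ∀ᶠ y in 𝓝 z, f y ≤ f z + segmentLength F z y) (w : E) : fderiv ℝ f z w ≤ F z w := by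
  have segment_quotient (t : ℝ) (ht : 0 < t) : t⁻¹ * segmentLength F z (z + t • w) =
      ∫ s in (0 : ℝ)..1, F (z + (s * t) • w) w := by
    simp only [segmentLength_eq_integral, AffineMap.lineMap_apply, vsub_eq_sub, vadd_eq_add,
      add_sub_cancel_left, smul_smul, hF.map_smul _ _ t ht.le, intervalIntegral.integral_const_mul]
    simp only [inv_mul_cancel_left₀ ht.ne', add_comm z]
  have quotient_tendsto : Tendsto (fun t : ℝ => ∫ s in (0 : ℝ)..1, F (z + (s * t) • w) w)
      (𝓝[>] 0) (𝓝 (F z w)) := by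
    have : Continuous fun t : ℝ => ∫ s in (0 : ℝ)..1, F (z + (s * t) • w) w :=
      continuous_parametric_intervalIntegral_of_continuous' (f := fun t s => F (z + (s * t) • w) w)
        (hF.continuous.comp
          (by fun_prop : Continuous fun x : ℝ × ℝ => (z + (x.2 * x.1) • w, w))) 0 1
    simpa using (this.tendsto 0).mono_left nhdsWithin_le_nhds
  have near : Tendsto (fun t : ℝ => z + t • w) (𝓝[>] 0) (𝓝 z) := by
    have : Continuous fun t : ℝ => z + t • w := by fun_prop
    simpa using (this.tendsto 0).mono_left nhdsWithin_le_nhds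
  refine le_of_tendsto_of_tendsto
    (hf.hasFDerivAt.hasLineDerivAt w).tendsto_slope_zero_right quotient_tendsto ?_
  filter_upwards [self_mem_nhdsWithin, near.eventually hle] with t ht hfle
  rw [← segment_quotient t ht, smul_eq_mul]
  exact mul_le_mul_of_nonneg_left (sub_le_iff_le_add'.2 hfle) (inv_nonneg.2 (le_of_lt ht))

variable [FiniteDimensional ℝ E]

theorem exists_le_mul_norm (hF : IsLengthDensity F) (hK : IsCompact K) :
    ∃ C : ℝ≥0, ∀ x ∈ K, ∀ w, F x w ≤ C * ‖w‖ := by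
  have hcompact := hK.prod (isCompact_sphere (0 : E) 1)
  obtain ⟨C, hC⟩ := hcompact.exists_bound_of_continuousOn hF.continuous.continuousOn
  refine ⟨C.toNNReal, fun x hx w => ?_⟩
  obtain rfl | hw := eq_or_ne w 0
  · simpa using (hF.map_smul x 0 0 le_rfl).le
  · have := hC (x, ‖w‖⁻¹ • w) ⟨hx, by simp [norm_smul, hw]⟩
    calc F x w = ‖w‖ * F x (‖w‖⁻¹ • w) := by
          rw [← hF.map_smul x _ _ (norm_nonneg w), smul_inv_smul₀ (norm_ne_zero_iff.2 hw)]
      _ ≤ ‖w‖ * C := by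
          gcongr
          exact (le_abs_self _).trans this
      _ ≤ C.toNNReal * ‖w‖ := by
          rw [mul_comm]
          gcongr
          exact C.le_coe_toNNReal

theorem intervalIntegrable (hF : IsLengthDensity F) {γ : ℝ → E} {D : ℝ≥0} (hγ : LipschitzWith D γ)
    (a b : ℝ) : IntervalIntegrable (fun t => F (γ t) (deriv γ t)) volume a b := by
  have := FiniteDimensional.complete ℝ E
  obtain ⟨C, hC⟩ := hF.exists_le_mul_norm (isCompact_uIcc.image hγ.continuous)
  refine intervalIntegrable_iff.2 (Measure.integrableOn_of_bounded (M := C * D) (by simp) ?_ ?_)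
  · exact (hF.continuous.comp_stronglyMeasurable
      (hγ.continuous.stronglyMeasurable.prodMk (stronglyMeasurable_deriv γ))).aestronglyMeasurable
  · refine (ae_restrict_iff' measurableSet_uIoc).2 (.of_forall fun t ht => ?_)
    rw [Real.norm_of_nonneg (hF.nonneg _ _)]
    refine (hC _ (mem_image_of_mem γ (uIoc_subset_uIcc ht)) _).trans ?_
    gcongr
    exact norm_deriv_le_of_lipschitz hγ

theorem curveLength_appendSegment (hF : IsLengthDensity F) {γ : ℝ → E} {D : ℝ≥0}
    (hγ : LipschitzWith D γ) {T : ℝ} (hT : 0 ≤ T) (q : E) :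
    curveLength F (appendSegment γ T q) 0 (T + 1) =
      curveLength F γ 0 T + segmentLength F (γ T) q := by
  obtain ⟨D', hD'⟩ := exists_lipschitzWith_appendSegment hγ T q
  have split : curveLength F (appendSegment γ T q) 0 (T + 1) =
      curveLength F (appendSegment γ T q) 0 T + curveLength F (appendSegment γ T q) T (T + 1) :=
    (integral_add_adjacent_intervals (hF.intervalIntegrable hD' _ _)
      (hF.intervalIntegrable hD' _ _)).symm
  have before : EqOn (appendSegment γ T q) γ (uIoo 0 T) := fun t ht => by
    rw [uIoo_of_le hT] at ht
    exact appendSegment_of_le ht.2.le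
  have after : EqOn (appendSegment γ T q) (fun t => AffineMap.lineMap (γ T) q (t - T))
      (uIoo T (T + 1)) := fun t ht => by
    rw [uIoo_of_le (by simp)] at ht
    exact appendSegment_of_mem_Icc ⟨sub_nonneg.2 ht.1.le, sub_le_iff_le_add'.2 ht.2.le⟩
  rw [split, curveLength_congr before, curveLength_congr after, curveLength_comp_sub_right,
    sub_self, add_sub_cancel_left, segmentLength]

theorem add_segmentLength_mem_reachLengths (hF : IsLengthDensity F) (hK : Convex ℝ K) (hq : q ∈ K)
    {L : ℝ} (hL : L ∈ reachLengths F K A p) : L + segmentLength F p q ∈ reachLengths F K A q := by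
  obtain ⟨T, γ, hT, ⟨C, hγ⟩, γ_mem, γ_zero, rfl, rfl⟩ := hL
  refine ⟨T + 1, appendSegment γ T q, by positivity, exists_lipschitzWith_appendSegment hγ T q,
    appendSegment_mem hK hT γ_mem hq, ?_, ?_, hF.curveLength_appendSegment hγ hT q⟩
  · rwa [appendSegment_of_le hT]
  · rw [appendSegment_of_mem_Icc (by simp)]
    simp

theorem reachLengths_nonempty (hF : IsLengthDensity F) (hK : Convex ℝ K) (hA : (A ∩ K).Nonempty)
    (hp : p ∈ K) : (reachLengths F K A p).Nonempty :=
  let ⟨_, ha, haK⟩ := hA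
  ⟨_, hF.add_segmentLength_mem_reachLengths hK hp (zero_mem_reachLengths ha haK)⟩

theorem pathDist_le_add_segmentLength (hF : IsLengthDensity F) (hK : Convex ℝ K)
    (hA : (A ∩ K).Nonempty) (hp : p ∈ K) (hq : q ∈ K) :
    pathDist F K A q ≤ pathDist F K A p + segmentLength F p q := by
  rw [← sub_le_iff_le_add]
  refine le_csInf (hF.reachLengths_nonempty hK hA hp) fun L hL => ?_
  exact sub_le_iff_le_add.2 (csInf_le hF.bddBelow_reachLengths
    (hF.add_segmentLength_mem_reachLengths hK hq hL))

theorem le_pathDist (hF : IsLengthDensity F) (hK : Convex ℝ K) (hA : (A ∩ K).Nonempty) (hp : p ∈ K)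
    {c : ℝ}
    (hc : ∀ γ : ℝ → E, (∃ C, LipschitzWith C γ) → MapsTo γ (Icc 0 1) K → γ 0 ∈ A → γ 1 = p →
      c ≤ curveLength F γ 0 1) : c ≤ pathDist F K A p := by
  refine le_csInf (hF.reachLengths_nonempty hK hA hp) fun L hL => ?_
  obtain ⟨T, γ, hT, ⟨C, hγ⟩, γ_mem, γ_zero, γ_T, rfl⟩ := hL
  rw [← hF.curveLength_comp_mul_left γ hT]
  refine hc _ ⟨_, hγ.comp (lipschitzWith_smul T)⟩ (fun t ht => γ_mem ?_) ?_ ?_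
  · exact ⟨mul_nonneg hT ht.1, mul_le_of_le_one_right hT ht.2⟩
  · simpa using γ_zero
  · simpa using γ_T

theorem exists_lipschitzOnWith_pathDist (hF : IsLengthDensity F) (hK : Convex ℝ K)
    (hK' : IsCompact K) (hA : (A ∩ K).Nonempty) : ∃ C, LipschitzOnWith C (pathDist F K A) K := by
  obtain ⟨C, hC⟩ := hF.exists_le_mul_norm hK'
  refine ⟨C, .of_le_add_mul C fun q hq p hp =>
    (hF.pathDist_le_add_segmentLength hK hA hp hq).trans ?_⟩
  gcongr
  rw [dist_comm]
  exact hF.segmentLength_le_mul_dist hK hC hp hq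

end IsLengthDensity

end CurveLength

section FaceDistance

theorem face_inter_cube_nonempty {ι : Type*} (i : ι) :
    ({x : ι → ℝ | x i = 0} ∩ Icc 0 1).Nonempty :=
  ⟨0, rfl, le_rfl, zero_le_one⟩

variable {ι : Type*} [Fintype ι] {F : (ι → ℝ) → (ι → ℝ) → ℝ} {i : ι}

/-- The intrinsic distance in the unit cube to the face `x i = 0`, truncated at `1` and extended to
the whole space by the retraction onto the cube. -/
noncomputable def faceDist (F : (ι → ℝ) → (ι → ℝ) → ℝ) (i : ι) (p : ι → ℝ) : ℝ :=
  min (pathDist F (Icc 0 1) {x | x i = 0} (clamp p)) 1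

namespace IsLengthDensity

theorem isRamp_faceDist (hF : IsLengthDensity F)
    (hdist : ∀ γ : ℝ → ι → ℝ, (∃ C, LipschitzWith C γ) → MapsTo γ (Icc 0 1) (Icc 0 1) →
      γ 0 i = 0 → γ 1 i = 1 → 1 ≤ curveLength F γ 0 1) : IsRamp i (faceDist F i) where
  exists_lipschitzWith := by
    obtain ⟨C, hC⟩ := hF.exists_lipschitzOnWith_pathDist (convex_Icc 0 1) isCompact_Icc
      (face_inter_cube_nonempty i)
    have : LipschitzWith (C * 1) fun p => pathDist F (Icc 0 1) {x | x i = 0} (clamp p) :=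
      lipschitzOnWith_univ.1 (hC.comp lipschitzWith_clamp.lipschitzOnWith fun p _ => clamp_mem p)
    exact ⟨_, this.min_const 1⟩
  eq_zero p hp := by
    rw [faceDist, hF.pathDist_eq_zero (clamp_apply_of_le_zero hp) (clamp_mem p),
      min_eq_left zero_le_one]
  eq_one p hp := by
    refine min_eq_right (hF.le_pathDist (convex_Icc 0 1) (face_inter_cube_nonempty i)
      (clamp_mem p) fun γ γ_lip γ_mem γ_zero γ_one => hdist γ γ_lip γ_mem γ_zero ?_)
    rw [γ_one, clamp_apply_of_one_le hp]

theorem faceDist_le_add_segmentLength (hF : IsLengthDensity F) {p q : ι → ℝ}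
    (hp : p ∈ Icc 0 1) (hq : q ∈ Icc 0 1) :
    faceDist F i q ≤ faceDist F i p + segmentLength F p q := by
  rw [faceDist, faceDist, clamp_of_mem hp, clamp_of_mem hq, ← min_add_add_right]
  exact min_le_min (hF.pathDist_le_add_segmentLength (convex_Icc 0 1) (face_inter_cube_nonempty i)
    hp hq) (le_add_of_nonneg_right hF.segmentLength_nonneg)

theorem fderiv_faceDist_apply_le (hF : IsLengthDensity F) {p : ι → ℝ}
    (hp : p ∈ interior (Icc 0 1)) (hdiff : DifferentiableAt ℝ (faceDist F i) p) (w : ι → ℝ) :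
    fderiv ℝ (faceDist F i) p w ≤ F p w :=
  hF.fderiv_apply_le hdiff (mem_of_superset (mem_interior_iff_mem_nhds.1 hp) fun _ hq =>
    hF.faceDist_le_add_segmentLength (interior_subset hp) hq) w

end IsLengthDensity

end FaceDistance

section Metric

variable {ι : Type*} [Fintype ι]

/-- The norm of the tangent vector `w` at `x` for a metric `g` given on the unit cube. Evaluating
`g` at `clamp x` makes it continuous on the whole space. -/
noncomputable def metricDensity (g : (ι → ℝ) → Matrix ι ι ℝ) (x w : ι → ℝ) : ℝ :=
  √(w ⬝ᵥ g (clamp x) *ᵥ w)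

theorem isLengthDensity_metricDensity {g : (ι → ℝ) → Matrix ι ι ℝ}
    (hg : ContinuousOn g (Icc 0 1)) : IsLengthDensity (metricDensity g) where
  continuous := by
    have : Continuous fun x => g (clamp x) :=
      hg.comp_continuous lipschitzWith_clamp.continuous clamp_mem
    exact (continuous_snd.dotProduct
      ((this.comp continuous_fst).matrix_mulVec continuous_snd)).sqrt
  nonneg _ _ := Real.sqrt_nonneg _
  map_smul x w c hc := by
    simp only [metricDensity, mulVec_smul, dotProduct_smul, smul_dotProduct, smul_eq_mul,
      ← mul_assoc]
    rw [Real.sqrt_mul (mul_self_nonneg c), Real.sqrt_mul_self hc]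

variable {g : (Fin 2 → ℝ) → Matrix (Fin 2) (Fin 2) ℝ}

theorem curveLength_metricDensity {γ : ℝ → Fin 2 → ℝ} (hγ : MapsTo γ (Icc 0 1) (Icc 0 1)) :
    curveLength (metricDensity g) γ 0 1 = gLength2 g γ :=
  intervalIntegral.integral_congr fun t ht => by
    rw [uIcc_of_le zero_le_one] at ht
    simp only [metricDensity, clamp_of_mem (hγ ht)]

theorem jacobianDet_le_sqrt_det {u v : (Fin 2 → ℝ) → ℝ} {p : Fin 2 → ℝ}
    {G : Matrix (Fin 2) (Fin 2) ℝ} (hG : G.PosSemidef)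
    (hu : ∀ w, fderiv ℝ u p w ≤ √(w ⬝ᵥ G *ᵥ w)) (hv : ∀ w, fderiv ℝ v p w ≤ √(w ⬝ᵥ G *ᵥ w)) :
    jacobianDet u v p ≤ √G.det := by
  have row_dotProduct (f : (Fin 2 → ℝ) →L[ℝ] ℝ) (w : Fin 2 → ℝ) :
      (fun k => f (Pi.single k 1)) ⬝ᵥ w = f w := by
    conv_rhs => rw [pi_eq_sum_univ' w]
    simp [dotProduct, mul_comm]
  let A : Matrix (Fin 2) (Fin 2) ℝ :=
    .of ![fun k => fderiv ℝ u p (Pi.single k 1), fun k => fderiv ℝ v p (Pi.single k 1)]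
  have det_A : A.det = jacobianDet u v p := det_fin_two A
  rw [← det_A]
  refine det_le_sqrt_det_of_row_le_sqrt hG (Fin.forall_fin_two.2 ⟨fun w => ?_, fun w => ?_⟩)
  · exact (row_dotProduct (fderiv ℝ u p) w).trans_le (hu w)
  · exact (row_dotProduct (fderiv ℝ v p) w).trans_le (hv w)

theorem ae_jacobianDet_faceDist_le_sqrt_det (hg : ContinuousOn g (Icc 0 1))
    (hpos : ∀ p ∈ Icc 0 1, (g p).PosSemidef)
    (hramp : ∀ i, IsRamp i (faceDist (metricDensity g) i)) :
    ∀ᵐ p ∂volume.restrict (Icc 0 1),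
      jacobianDet (faceDist (metricDensity g) 0) (faceDist (metricDensity g) 1) p ≤
        √(g p).det := by
  have ae_differentiable (i : Fin 2) :
      ∀ᵐ p, DifferentiableAt ℝ (faceDist (metricDensity g) i) p :=
    let ⟨_, hC⟩ := (hramp i).exists_lipschitzWith
    hC.ae_differentiableAt
  have ae_interior : ∀ᵐ p : Fin 2 → ℝ, p ∈ Icc 0 1 → p ∈ interior (Icc 0 1) := by
    filter_upwards [measure_eq_zero_iff_ae_notMem.1 ((convex_Icc 0 1).addHaar_frontier volume)]
      with p hp hmem
    exact by_contra fun h => hp ⟨subset_closure hmem, h⟩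
  rw [ae_restrict_iff' measurableSet_Icc]
  filter_upwards [ae_differentiable 0, ae_differentiable 1, ae_interior] with p h0 h1 h_int hp
  have fderiv_le {i} (hi : DifferentiableAt ℝ (faceDist (metricDensity g) i) p) (w : Fin 2 → ℝ) :
      fderiv ℝ (faceDist (metricDensity g) i) p w ≤ √(w ⬝ᵥ g p *ᵥ w) := by
    simpa only [metricDensity, clamp_of_mem hp] using
      (isLengthDensity_metricDensity hg).fderiv_faceDist_apply_le (h_int hp) hi w
  exact jacobianDet_le_sqrt_det (hpos p hp) (fderiv_le h0) (fderiv_le h1)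

theorem besicovitch_inequality_dim2_general (hg : ContinuousOn g (Icc 0 1))
    (hpos : ∀ p ∈ Icc 0 1, (g p).PosSemidef)
    (hdist : ∀ i, ∀ γ : ℝ → Fin 2 → ℝ, (∃ C, LipschitzWith C γ) → MapsTo γ (Icc 0 1) (Icc 0 1) →
      γ 0 i = 0 → γ 1 i = 1 → 1 ≤ gLength2 g γ) :
    1 ≤ ∫ p in Icc 0 1, √(g p).det := by
  have hramp (i : Fin 2) : IsRamp i (faceDist (metricDensity g) i) :=
    (isLengthDensity_metricDensity hg).isRamp_faceDist fun γ γ_lip γ_mem γ_zero γ_one =>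
      (hdist i γ γ_lip γ_mem γ_zero γ_one).trans_eq (curveLength_metricDensity γ_mem).symm
  have sqrt_det_continuousOn : ContinuousOn (fun p => √(g p).det) (Icc 0 1) :=
    (Continuous.matrix_det continuous_id).comp_continuousOn hg |>.sqrt
  rw [← setIntegral_Icc_jacobianDet (hramp 0) (hramp 1)]
  exact setIntegral_mono_ae_restrict
    (integrable_jacobianDet zero_ne_one (hramp 0) (hramp 1)).integrableOn
    (sqrt_det_continuousOn.integrableOn_compact isCompact_Icc)
    (ae_jacobianDet_faceDist_le_sqrt_det hg hpos hramp)

end Metric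

/-- **Besicovitch inequality (dimension 2).** Let `g` be a continuous Riemannian metric on the
unit square `[0,1]²` such that every Lipschitz curve joining the two opposite vertical sides
(`x₀ = 0` and `x₀ = 1`) has `g`-length at least `1`, and likewise for the horizontal sides
(`x₁ = 0` and `x₁ = 1`). Then the `g`-area `∫_{[0,1]²} √(det g)` is at least `1`. -/
theorem besicovitch_inequality_dim2
    (g : (Fin 2 → ℝ) → Matrix (Fin 2) (Fin 2) ℝ)
    (hg_cont : Continuous g)
    (hg_posdef : ∀ p, (g p).PosDef)
    (hdist : ∀ i : Fin 2, ∀ γ : ℝ → (Fin 2 → ℝ), (∃ K : NNReal, LipschitzWith K γ) →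
      (∀ t ∈ Set.Icc (0:ℝ) 1, γ t ∈ Set.Icc (0 : Fin 2 → ℝ) 1) →
      γ 0 i = 0 → γ 1 i = 1 →
      1 ≤ gLength2 g γ) :
    1 ≤ ∫ p in Set.Icc (0 : Fin 2 → ℝ) 1, Real.sqrt (g p).det :=
  besicovitch_inequality_dim2_general hg_cont.continuousOn
    (fun p _ => (hg_posdef p).posSemidef) hdist
end
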